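/- One has ⁅K 1 3 + K 2 4, K 1 4 - K 2 3⁆ = 4 • (K 1 2 - K 3 4). -/

import Mathlib

/-!
In each of the four brackets obtained by expanding the left-hand side, the two factors share exactly
one index. Skew-symmetry moves the shared index to the inner positions, where `⁅K i j, K j k⁆` is
known; the four values then agree in pairs, which doubles the coefficient.
-/

/-- The relations between the standard generators of an orthogonal Lie algebra, up to the scale `c`,
as satisfied by the operators `K i j` with `c = 2`. The diagonal entries `K i i` are arbitrary, and
brackets of two generators without a common index are left free. -/
structure IsRotationFamily {ι R L : Type*} [LieRing L] [SMul R L] (c : R) (K : ι → ι → L) :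
    Prop where
  skew {i j : ι} : i ≠ j → K i j = -K j i
  lie {i j k : ι} : i ≠ j → j ≠ k → i ≠ k → ⁅K i j, K j k⁆ = c • K i k

section

variable {ι R L : Type*} [LieRing L] [Semiring R] [Module R L] {c : R} {K : ι → ι → L}
  {i j k l : ι}

namespace IsRotationFamily

theorem lie_common_left (hK : IsRotationFamily c K) (hij : i ≠ j) (hik : i ≠ k) (hjk : j ≠ k) :
    ⁅K i j, K i k⁆ = c • K k j := by
  rw [hK.skew hij, neg_lie, hK.lie hij.symm hik hjk, hK.skew hjk, smul_neg, neg_neg]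

theorem lie_common_right (hK : IsRotationFamily c K) (hij : i ≠ j) (hik : i ≠ k) (hjk : j ≠ k) :
    ⁅K i k, K j k⁆ = c • K j i := by
  rw [hK.skew hjk, lie_neg, hK.lie hik hjk.symm hij, hK.skew hij, smul_neg, neg_neg]

end IsRotationFamily

theorem stmt9_general (hK : IsRotationFamily c K) (hij : i ≠ j) (hik : i ≠ k) (hil : i ≠ l)
    (hjk : j ≠ k) (hjl : j ≠ l) (hkl : k ≠ l) :
    ⁅K i k + K j l, K i l - K j k⁆ = (2 * c) • (K i j - K k l) :=
  calc
    ⁅K i k + K j l, K i l - K j k⁆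
      = ⁅K i k, K i l⁆ - ⁅K i k, K j k⁆ + (⁅K j l, K i l⁆ - ⁅K j l, K j k⁆) := by
        rw [add_lie, lie_sub, lie_sub]
    _ = c • K l k - c • K j i + (c • K i j - c • K k l) := by
        rw [hK.lie_common_left hik hil hkl, hK.lie_common_right hij hik hjk,
          hK.lie_common_right hij.symm hjl hil, hK.lie_common_left hjl hjk hkl.symm]
    _ = (2 * c) • (K i j - K k l) := by
        rw [hK.skew hkl.symm, hK.skew hij.symm, two_mul, add_smul, smul_sub, smul_neg, smul_neg]
        abel

end

/-- CONTEXT: Lie algebra over ℂ with sl₂-triples (e i, h, f i), i ∈ {1,2,3,4}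
(encoded as Fin 4), and the operators K i j := ⁅e i, f j⁆ satisfying the
Verbitsky relations. -/
theorem stmt9 {L : Type*} [LieRing L] [LieAlgebra ℂ L]
    (h : L) (e f : Fin 4 → L)
    (hhe : ∀ i, ⁅h, e i⁆ = (2 : ℂ) • e i)
    (hhf : ∀ i, ⁅h, f i⁆ = (-2 : ℂ) • f i)
    (hef : ∀ i, ⁅e i, f i⁆ = h)
    (K : Fin 4 → Fin 4 → L)
    (hKdef : ∀ i j, i ≠ j → K i j = ⁅e i, f j⁆)
    (hKskew : ∀ i j, i ≠ j → K i j = -K j i)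
    (hKK : ∀ i j k, i ≠ j → j ≠ k → i ≠ k → ⁅K i j, K j k⁆ = (2 : ℂ) • K i k)
    (hKh : ∀ i j, i ≠ j → ⁅K i j, h⁆ = 0)
    (hKe : ∀ i j, i ≠ j → ⁅K i j, e j⁆ = (2 : ℂ) • e i)
    (hKf : ∀ i j, i ≠ j → ⁅K i j, f j⁆ = (2 : ℂ) • f i)
    (hKe0 : ∀ i j k, i ≠ j → j ≠ k → i ≠ k → ⁅K i j, e k⁆ = 0)
    (hKf0 : ∀ i j k, i ≠ j → j ≠ k → i ≠ k → ⁅K i j, f k⁆ = 0) :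
    ⁅K 0 2 + K 1 3, K 0 3 - K 1 2⁆ = (4 : ℂ) • (K 0 1 - K 2 3) := by
  rw [show (4 : ℂ) = 2 * 2 by norm_num]
  apply stmt9_general ⟨hKskew _ _, hKK _ _ _⟩ <;> decide
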